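/- Let q > 1 be a real number and i ≤ φ ≤ Λ natural numbers. Then Σ_{ℓ=0}^{i} [i; ℓ] [Λ−i; φ−ℓ] q^{2ℓ(Λ−φ)} (−1)^ℓ q^{ℓ(ℓ−1)} γ(2(φ−ℓ), i−ℓ) = (−1)^i q^{i(i−1)} [Λ−i; Λ−φ]. -/

import Mathlib

/-- The skew-q-nary Gaussian coefficient `[x;k]` for real `x`. -/
noncomputable def gaussQ (q x : ℝ) (k : ℕ) : ℝ :=
  ∏ i ∈ Finset.range k, (q ^ (2 * x) - q ^ (2 * (i : ℝ))) / (q ^ (2 * (k : ℝ)) - q ^ (2 * (i : ℝ)))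

/-- The skew-q-nary Gamma function `γ(x,k)`. -/
noncomputable def skewGamma (q x : ℝ) (k : ℕ) : ℝ :=
  ∏ i ∈ Finset.range k, (q ^ x - q ^ (2 * (i : ℝ)))

/-- The product `(x - 1)(x - p) ⋯ (x - p ^ (k - 1))`. -/
noncomputable def geomFalling (p : ℝ) (k : ℕ) (x : ℝ) : ℝ :=
  ∏ j ∈ Finset.range k, (x - p ^ j)

theorem geomFalling_zero (p x : ℝ) : geomFalling p 0 x = 1 := by
  simp [geomFalling]

theorem geomFalling_succ (p : ℝ) (k : ℕ) (x : ℝ) :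
    geomFalling p (k + 1) x = geomFalling p k x * (x - p ^ k) :=
  Finset.prod_range_succ _ _

theorem geomFalling_add_pow_mul (p : ℝ) (a k : ℕ) (y : ℝ) :
    geomFalling p (a + k) (p ^ a * y) =
      geomFalling p a (p ^ a * y) * p ^ (a * k) * geomFalling p k y := by
  simp only [geomFalling, Finset.prod_range_add, pow_add, ← mul_sub, Finset.prod_mul_distrib,
    Finset.prod_const, Finset.card_range, pow_mul]
  ring

theorem geomFalling_succ_mul (p : ℝ) (k : ℕ) (x : ℝ) :
    geomFalling p (k + 1) (p * x) = (p * x - 1) * p ^ k * geomFalling p k x := by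
  have h := geomFalling_add_pow_mul p 1 k x
  rw [add_comm 1 k] at h
  simpa [geomFalling] using h

theorem geomFalling_pow_pos {p : ℝ} (hp : 1 < p) {k n : ℕ} (hkn : k ≤ n) :
    0 < geomFalling p k (p ^ n) := by
  refine Finset.prod_pos fun j hj => sub_pos.2 (pow_lt_pow_right₀ hp ?_)
  have := Finset.mem_range.1 hj
  omega

theorem geomFalling_pow_eq_zero (p : ℝ) {k n : ℕ} (hnk : n < k) :
    geomFalling p k (p ^ n) = 0 :=
  Finset.prod_eq_zero (Finset.mem_range.2 hnk) (sub_self _)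

theorem geomFalling_pow_add_symm {p : ℝ} (hp : 1 < p) (a k : ℕ) :
    geomFalling p a (p ^ (a + k)) * geomFalling p k (p ^ k) =
      geomFalling p k (p ^ (a + k)) * geomFalling p a (p ^ a) := by
  have h₁ := geomFalling_add_pow_mul p a k (p ^ k)
  have h₂ := geomFalling_add_pow_mul p k a (p ^ a)
  rw [← pow_add] at h₁ h₂
  rw [add_comm k a, mul_comm k a, h₁] at h₂
  have hpos : p ^ (a * k) ≠ 0 := (pow_pos (by linarith) _).ne'
  apply mul_right_cancel₀ hpos
  linear_combination h₂

/-- The Gaussian coefficient with base `p`, as a function of `x = p ^ n`. -/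
noncomputable def gaussCoeff (p : ℝ) (x : ℝ) (k : ℕ) : ℝ :=
  geomFalling p k x / geomFalling p k (p ^ k)

theorem gaussCoeff_zero (p x : ℝ) : gaussCoeff p x 0 = 1 := by
  simp [gaussCoeff, geomFalling]

theorem gaussCoeff_pow_eq_zero (p : ℝ) {n k : ℕ} (hnk : n < k) : gaussCoeff p (p ^ n) k = 0 := by
  rw [gaussCoeff, geomFalling_pow_eq_zero p hnk, zero_div]

theorem gaussCoeff_pow_add_symm {p : ℝ} (hp : 1 < p) (a b : ℕ) :
    gaussCoeff p (p ^ (a + b)) a = gaussCoeff p (p ^ (a + b)) b := by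
  rw [gaussCoeff, gaussCoeff, div_eq_div_iff (geomFalling_pow_pos hp le_rfl).ne'
    (geomFalling_pow_pos hp le_rfl).ne', geomFalling_pow_add_symm hp]

/-- The Pascal recurrence. -/
theorem gaussCoeff_mul_succ {p : ℝ} (hp : 1 < p) (x : ℝ) (k : ℕ) :
    gaussCoeff p (p * x) (k + 1) = p ^ (k + 1) * gaussCoeff p x (k + 1) + gaussCoeff p x k := by
  have hk : geomFalling p k (p ^ k) ≠ 0 := (geomFalling_pow_pos hp le_rfl).ne'
  have hpk : p ^ k ≠ 0 := (pow_pos (by linarith) _).ne'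
  have h1 : p * p ^ k - 1 ≠ 0 := by
    rw [← pow_succ']
    exact (sub_pos.2 (one_lt_pow₀ hp (by omega))).ne'
  simp only [gaussCoeff, pow_succ' p k]
  rw [geomFalling_succ_mul p k (p ^ k), geomFalling_succ_mul, geomFalling_succ]
  field_simp
  ring

theorem gaussCoeff_mul_geomFalling {p : ℝ} (hp : 1 < p) (a b k : ℕ) :
    gaussCoeff p (p ^ (a + b)) (a + k) * geomFalling p k (p ^ (a + k)) =
      gaussCoeff p (p ^ (a + b)) a * geomFalling p k (p ^ b) := by
  have hak := (geomFalling_pow_pos hp (le_refl (a + k))).ne'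
  have ha := (geomFalling_pow_pos hp (le_refl a)).ne'
  rw [gaussCoeff, gaussCoeff, div_mul_eq_mul_div, div_mul_eq_mul_div, div_eq_div_iff hak ha,
    pow_add p a b, geomFalling_add_pow_mul, pow_add p a k, geomFalling_add_pow_mul, ← pow_add p a k]
  linear_combination (-(geomFalling p a (p ^ a * p ^ b) * p ^ (a * k) * geomFalling p k (p ^ b))) *
    geomFalling_pow_add_symm hp a k

theorem sum_gaussCoeff_mul_geomFalling {p : ℝ} (hp : 1 < p) (x : ℝ) (n : ℕ) :
    ∑ ℓ ∈ Finset.range (n + 1),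
        gaussCoeff p (p ^ n) ℓ * (-x) ^ ℓ * p ^ ℓ.choose 2 * geomFalling p (n - ℓ) x =
      (-1) ^ n * p ^ n.choose 2 := by
  induction n with
  | zero => simp [gaussCoeff_zero, geomFalling_zero]
  | succ n ih =>
    have hchoose : ∀ m : ℕ, (m + 1).choose 2 = m + m.choose 2 := fun m => by
      rw [Nat.choose_succ_succ' m 1, Nat.choose_one_right]
    let A : ℕ → ℝ := fun ℓ =>
      p ^ ℓ * gaussCoeff p (p ^ n) ℓ * (-x) ^ ℓ * p ^ ℓ.choose 2 * geomFalling p (n + 1 - ℓ) x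
    let B : ℕ → ℝ := fun ℓ =>
      gaussCoeff p (p ^ n) ℓ * (-x) ^ (ℓ + 1) * p ^ (ℓ + 1).choose 2 * geomFalling p (n - ℓ) x
    have hA : A (n + 1) = 0 := by simp [A, gaussCoeff_pow_eq_zero p (Nat.lt_succ_self n)]
    have hsplit : ∀ ℓ, gaussCoeff p (p ^ (n + 1)) (ℓ + 1) * (-x) ^ (ℓ + 1) *
        p ^ (ℓ + 1).choose 2 * geomFalling p (n + 1 - (ℓ + 1)) x = A (ℓ + 1) + B ℓ := fun ℓ => by
      simp only [A, B, pow_succ' p n, gaussCoeff_mul_succ hp, Nat.add_sub_add_right]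
      ring
    have hzero : gaussCoeff p (p ^ (n + 1)) 0 * (-x) ^ 0 * p ^ Nat.choose 0 2 *
        geomFalling p (n + 1 - 0) x = A 0 := by
      simp [A, gaussCoeff_zero]
    rw [Finset.sum_range_succ', hzero, Finset.sum_congr rfl fun ℓ _ => hsplit ℓ,
      Finset.sum_add_distrib, add_right_comm, ← Finset.sum_range_succ', Finset.sum_range_succ, hA,
      add_zero, ← Finset.sum_add_distrib]
    have hterm : ∀ ℓ ∈ Finset.range (n + 1), A ℓ + B ℓ = -p ^ n *
        (gaussCoeff p (p ^ n) ℓ * (-x) ^ ℓ * p ^ ℓ.choose 2 * geomFalling p (n - ℓ) x) := by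
      intro ℓ hℓ
      obtain ⟨m, rfl⟩ := Nat.exists_eq_add_of_le (Nat.lt_succ_iff.1 (Finset.mem_range.1 hℓ))
      simp only [A, B, hchoose, add_assoc ℓ m 1, Nat.add_sub_cancel_left, geomFalling_succ]
      ring
    rw [Finset.sum_congr rfl hterm, ← Finset.mul_sum, ih, hchoose]
    ring

theorem rpow_two_mul_natCast {q : ℝ} (hq : 0 ≤ q) (n : ℕ) :
    q ^ (2 * (n : ℝ)) = (q ^ 2) ^ n := by
  rw [Real.rpow_mul hq, Real.rpow_natCast, Real.rpow_two]

theorem gaussQ_natCast {q : ℝ} (hq : 0 ≤ q) (n k : ℕ) :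
    gaussQ q n k = gaussCoeff (q ^ 2) ((q ^ 2) ^ n) k := by
  simp only [gaussQ, gaussCoeff, geomFalling, rpow_two_mul_natCast hq, Finset.prod_div_distrib]

theorem skewGamma_two_mul_natCast {q : ℝ} (hq : 0 ≤ q) (n k : ℕ) :
    skewGamma q (2 * (n : ℝ)) k = geomFalling (q ^ 2) k ((q ^ 2) ^ n) := by
  simp only [skewGamma, geomFalling, rpow_two_mul_natCast hq]

theorem pow_mul_pred (q : ℝ) (n : ℕ) : q ^ (n * (n - 1)) = (q ^ 2) ^ n.choose 2 := by
  rw [← pow_mul, Nat.choose_two_right, Nat.mul_div_cancel' (Nat.even_mul_pred_self n).two_dvd]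

theorem stmt15 (q : ℝ) (hq : 1 < q) (i φ Λ : ℕ) (hi : i ≤ φ) (hΛ : φ ≤ Λ) :
    (∑ ℓ ∈ Finset.range (i + 1),
        gaussQ q (i : ℝ) ℓ * gaussQ q ((Λ : ℝ) - (i : ℝ)) (φ - ℓ) * q ^ (2 * ℓ * (Λ - φ)) *
          (-1 : ℝ) ^ ℓ * q ^ (ℓ * (ℓ - 1)) * skewGamma q (2 * ((φ : ℝ) - (ℓ : ℝ))) (i - ℓ))
      = (-1 : ℝ) ^ i * q ^ (i * (i - 1)) * gaussQ q ((Λ : ℝ) - (i : ℝ)) (Λ - φ) := by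
  have hq0 : 0 ≤ q := by linarith
  have hp : 1 < q ^ 2 := one_lt_pow₀ hq two_ne_zero
  obtain ⟨a, rfl⟩ := Nat.exists_eq_add_of_le' hi
  obtain ⟨b, rfl⟩ := Nat.exists_eq_add_of_le hΛ
  have hN : ((a + i + b : ℕ) : ℝ) - (i : ℝ) = ((a + b : ℕ) : ℝ) := by push_cast; ring
  simp only [hN, Nat.add_sub_cancel_left, gaussQ_natCast hq0, pow_mul_pred]
  rw [← gaussCoeff_pow_add_symm hp, ← sum_gaussCoeff_mul_geomFalling hp ((q ^ 2) ^ b),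
    Finset.sum_mul]
  refine Finset.sum_congr rfl fun ℓ hℓ => ?_
  obtain ⟨k, rfl⟩ := Nat.exists_eq_add_of_le (Nat.lt_succ_iff.1 (Finset.mem_range.1 hℓ))
  have hcast : ((a + (ℓ + k) : ℕ) : ℝ) - (ℓ : ℝ) = ((a + k : ℕ) : ℝ) := by push_cast; ring
  have hsub : a + (ℓ + k) - ℓ = a + k := by omega
  have hpow : q ^ (2 * ℓ * b) = ((q ^ 2) ^ b) ^ ℓ := by ring
  rw [hcast, hsub, hpow, skewGamma_two_mul_natCast hq0, Nat.add_sub_cancel_left,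
    neg_pow ((q ^ 2) ^ b) ℓ]
  linear_combination (gaussCoeff (q ^ 2) ((q ^ 2) ^ (ℓ + k)) ℓ * ((q ^ 2) ^ b) ^ ℓ * (-1) ^ ℓ *
    (q ^ 2) ^ ℓ.choose 2) * gaussCoeff_mul_geomFalling hp a b k
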